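/- Let B be an H-bicomodule algebra via ρ : B → B ⊗ H and λ : B → H ⊗ B, and let A be a subalgebra of B possessing an element 1_A that is a two-sided identity for A (1_A not necessarily equal to the identity of B), such that for all a, b ∈ A: (λ(a) ⊗ 1_H)(1_H ⊗ ρ(b)) = (λ(a) ⊗ 1_H)(1_H ⊗ 1_A ⊗ 1_H)(1_H ⊗ ρ(b)), and both sides of this equality lie in H ⊗ A ⊗ H. Then the maps ρ̄(a) := (1_A ⊗ 1_H)ρ(a) and λ̄(a) := λ(a)(1_H ⊗ 1_A) take values in A ⊗ H and H ⊗ A respectively and make A a partial H-bicomodule algebra; in particular the compatibility (I_H ⊗ ρ̄)λ̄ = (λ̄ ⊗ I_H)ρ̄ holds on A. -/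

import Mathlib

/-!
Applying `ε` to an outer tensor leg of the hypothesis gives `ρ̄(S) ⊆ S ⊗ H` and
`λ̄(S) ⊆ H ⊗ S`, so `e` acts as an identity on the values of `ρ̄` and `λ̄`. Together with the
axioms of `ρ` and `λ`, this gives everything except the compatibility of `ρ̄` and `λ̄`.

The compatibility needs the antipode. Put `X = (λ ⊗ I)ρ(a) = (I ⊗ ρ)λ(a)`. Applying `λ` to the
middle leg of the hypothesis and contracting the two left legs by `x ⊗ y ↦ S(x)y` gives
  `(1 ⊗ e ⊗ 1) X = (1 ⊗ e ⊗ 1)(λ(e) ⊗ 1) X`  (`cond_left`),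
and symmetrically, applying `ρ` and contracting on the right,
  `X (1 ⊗ e ⊗ 1) = X (1 ⊗ ρ(e))(1 ⊗ e ⊗ 1)`  (`cond_right`).
The two sides of the compatibility are `(λ̄ ⊗ I)ρ̄(a) = (λ(e) ⊗ 1) X (1 ⊗ e ⊗ 1)` and
`(I ⊗ ρ̄)λ̄(a) = (1 ⊗ e ⊗ 1) X (1 ⊗ ρ(e))`. The first is fixed by left multiplication by
`1 ⊗ e ⊗ 1` and the second by right multiplication, so both equal
`(1 ⊗ e ⊗ 1) X (1 ⊗ e ⊗ 1)`.
-/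

/-!
STATEMENT 3: Let B be an H-bicomodule algebra via ρ : B → B ⊗ H and λ : B → H ⊗ B, and
let A (realized as a k-subspace `S` of B closed under multiplication) be a subalgebra
of B possessing a two-sided identity 1_A = e (not necessarily the identity of B), such
that for all a, b ∈ A:
  (λ(a) ⊗ 1_H)(1_H ⊗ ρ(b)) = (λ(a) ⊗ 1_H)(1_H ⊗ 1_A ⊗ 1_H)(1_H ⊗ ρ(b)),
and both sides of this equality lie in H ⊗ A ⊗ H.  Then the maps
ρ̄(a) := (1_A ⊗ 1_H)ρ(a) and λ̄(a) := λ(a)(1_H ⊗ 1_A) take values in A ⊗ H and H ⊗ A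
respectively and make A a partial H-bicomodule algebra; in particular the
compatibility (I_H ⊗ ρ̄)λ̄ = (λ̄ ⊗ I_H)ρ̄ holds on A.

All identifications of iterated tensor products are made through the canonical
associators; "lies in H ⊗ A ⊗ H" means membership in the range of the canonical map
H ⊗ S ⊗ H → H ⊗ B ⊗ H induced by the inclusion S ↪ B.
-/

open TensorProduct

noncomputable section

variable {k : Type*} [Field k]
variable {H : Type*} [Ring H] [HopfAlgebra k H]

/-- Right `H`-comodule algebra (global). -/
def IsRightComoduleAlgebra {B : Type*} [Ring B] [Algebra k B]
    (rho : B →ₗ[k] B ⊗[k] H) : Prop :=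
  (∀ b : B,
    (TensorProduct.rid k B) ((LinearMap.lTensor B (Coalgebra.counit (R := k))) (rho b)) = b) ∧
  (∀ b c : B, rho (b * c) = rho b * rho c) ∧
  (∀ b : B, (LinearMap.rTensor H rho) (rho b) =
    (TensorProduct.assoc k B H H).symm
      ((LinearMap.lTensor B (Coalgebra.comul (R := k))) (rho b)))

/-- Left `H`-comodule algebra (global). -/
def IsLeftComoduleAlgebra {B : Type*} [Ring B] [Algebra k B]
    (lam : B →ₗ[k] H ⊗[k] B) : Prop :=
  (∀ b : B,
    (TensorProduct.lid k B) ((LinearMap.rTensor B (Coalgebra.counit (R := k))) (lam b)) = b) ∧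
  (∀ b c : B, lam (b * c) = lam b * lam c) ∧
  (∀ b : B, (LinearMap.lTensor H lam) (lam b) =
    (TensorProduct.assoc k H H B)
      ((LinearMap.rTensor B (Coalgebra.comul (R := k))) (lam b)))

/-- `H`-bicomodule algebra (global), with the compatibility `(I ⊗ ρ)λ = (λ ⊗ I)ρ`. -/
def IsBicomoduleAlgebra {B : Type*} [Ring B] [Algebra k B]
    (lam : B →ₗ[k] H ⊗[k] B) (rho : B →ₗ[k] B ⊗[k] H) : Prop :=
  IsRightComoduleAlgebra rho ∧ IsLeftComoduleAlgebra lam ∧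
  ∀ b : B, (TensorProduct.assoc k H B H) ((LinearMap.rTensor H lam) (rho b)) =
    (LinearMap.lTensor H rho) (lam b)

section Helpers

variable {B : Type*} [Ring B] [Algebra k B]

/-! ### Linear maps on tensor products that are compatible with multiplication -/

lemma rTensor_mul_left {C : Type*} [Ring C] [Algebra k C] (f : B →ₗ[k] C)
    (hf : ∀ b c, f (b * c) = f b * f c) (x : B) (w : B ⊗[k] H) :
    LinearMap.rTensor H f ((x ⊗ₜ[k] (1 : H)) * w) =
      (f x ⊗ₜ[k] (1 : H)) * LinearMap.rTensor H f w := by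
  induction w with
  | zero => simp
  | tmul b h => simp [Algebra.TensorProduct.tmul_mul_tmul, hf]
  | add u v hu hv => simp only [mul_add, map_add, hu, hv]

lemma lTensor_mul_right {C : Type*} [Ring C] [Algebra k C] (f : B →ₗ[k] C)
    (hf : ∀ b c, f (b * c) = f b * f c) (x : B) (w : H ⊗[k] B) :
    LinearMap.lTensor H f (w * ((1 : H) ⊗ₜ[k] x)) =
      LinearMap.lTensor H f w * ((1 : H) ⊗ₜ[k] f x) := by
  induction w with
  | zero => simp
  | tmul b h => simp [Algebra.TensorProduct.tmul_mul_tmul, hf]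
  | add u v hu hv => simp only [add_mul, map_add, hu, hv]

lemma rTensor_mulLeft_comp {C : Type*} [Ring C] [Algebra k C] (f : B →ₗ[k] C) (c : C)
    (w : B ⊗[k] H) :
    LinearMap.rTensor H (LinearMap.mulLeft k c ∘ₗ f) w =
      (c ⊗ₜ[k] (1 : H)) * LinearMap.rTensor H f w := by
  induction w with
  | zero => simp
  | tmul b h => simp [Algebra.TensorProduct.tmul_mul_tmul]
  | add u v hu hv => simp only [mul_add, map_add, hu, hv]

lemma rTensor_mulRight_comp {C : Type*} [Ring C] [Algebra k C] (f : B →ₗ[k] C) (c : C)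
    (w : B ⊗[k] H) :
    LinearMap.rTensor H (LinearMap.mulRight k c ∘ₗ f) w =
      LinearMap.rTensor H f w * (c ⊗ₜ[k] (1 : H)) := by
  induction w with
  | zero => simp
  | tmul b h => simp [Algebra.TensorProduct.tmul_mul_tmul]
  | add u v hu hv => simp only [add_mul, map_add, hu, hv]

lemma lTensor_mulLeft_comp {C : Type*} [Ring C] [Algebra k C] (f : B →ₗ[k] C) (c : C)
    (w : H ⊗[k] B) :
    LinearMap.lTensor H (LinearMap.mulLeft k c ∘ₗ f) w =
      ((1 : H) ⊗ₜ[k] c) * LinearMap.lTensor H f w := by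
  induction w with
  | zero => simp
  | tmul b h => simp [Algebra.TensorProduct.tmul_mul_tmul]
  | add u v hu hv => simp only [mul_add, map_add, hu, hv]

lemma lTensor_mulRight_comp {C : Type*} [Ring C] [Algebra k C] (f : B →ₗ[k] C) (c : C)
    (w : H ⊗[k] B) :
    LinearMap.lTensor H (LinearMap.mulRight k c ∘ₗ f) w =
      LinearMap.lTensor H f w * ((1 : H) ⊗ₜ[k] c) := by
  induction w with
  | zero => simp
  | tmul b h => simp [Algebra.TensorProduct.tmul_mul_tmul]
  | add u v hu hv => simp only [add_mul, map_add, hu, hv]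

lemma assoc_mul {C D E : Type*} [Ring C] [Algebra k C] [Ring D] [Algebra k D] [Ring E]
    [Algebra k E] (u v : (C ⊗[k] D) ⊗[k] E) :
    TensorProduct.assoc k C D E (u * v) =
      TensorProduct.assoc k C D E u * TensorProduct.assoc k C D E v :=
  map_mul (Algebra.TensorProduct.assoc k k k C D E) u v

lemma assoc_symm_mul {C D E : Type*} [Ring C] [Algebra k C] [Ring D] [Algebra k D] [Ring E]
    [Algebra k E] (u v : C ⊗[k] (D ⊗[k] E)) :
    (TensorProduct.assoc k C D E).symm (u * v) =
      (TensorProduct.assoc k C D E).symm u * (TensorProduct.assoc k C D E).symm v :=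
  map_mul (Algebra.TensorProduct.assoc k k k C D E).symm u v

/-- Left multiplication by `x ⊗ 1` commutes with `(I ⊗ Δ)`. -/
lemma comul_mul_left (x : B) (w : B ⊗[k] H) :
    LinearMap.lTensor B (Coalgebra.comul (R := k)) ((x ⊗ₜ[k] (1 : H)) * w) =
      (x ⊗ₜ[k] ((1 : H) ⊗ₜ[k] (1 : H))) *
        LinearMap.lTensor B (Coalgebra.comul (R := k)) w := by
  induction w with
  | zero => simp
  | tmul b h =>
    simp [Algebra.TensorProduct.tmul_mul_tmul, ← Algebra.TensorProduct.one_def]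
  | add u v hu hv => simp only [mul_add, map_add, hu, hv]

lemma comul_mul_right (x : B) (w : H ⊗[k] B) :
    LinearMap.rTensor B (Coalgebra.comul (R := k)) (w * ((1 : H) ⊗ₜ[k] x)) =
      LinearMap.rTensor B (Coalgebra.comul (R := k)) w *
        (((1 : H) ⊗ₜ[k] (1 : H)) ⊗ₜ[k] x) := by
  induction w with
  | zero => simp
  | tmul b h =>
    simp [Algebra.TensorProduct.tmul_mul_tmul, ← Algebra.TensorProduct.one_def]
  | add u v hu hv => simp only [add_mul, map_add, hu, hv]

lemma counit_mul_left (x : B) (w : B ⊗[k] H) :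
    TensorProduct.rid k B (LinearMap.lTensor B (Coalgebra.counit (R := k))
        ((x ⊗ₜ[k] (1 : H)) * w)) =
      x * TensorProduct.rid k B (LinearMap.lTensor B (Coalgebra.counit (R := k)) w) := by
  induction w with
  | zero => simp
  | tmul b h => simp [Algebra.TensorProduct.tmul_mul_tmul]
  | add u v hu hv => simp only [mul_add, map_add, hu, hv]

lemma counit_mul_right (x : B) (w : H ⊗[k] B) :
    TensorProduct.lid k B (LinearMap.rTensor B (Coalgebra.counit (R := k))
        (w * ((1 : H) ⊗ₜ[k] x))) =
      TensorProduct.lid k B (LinearMap.rTensor B (Coalgebra.counit (R := k)) w) * x := by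
  induction w with
  | zero => simp
  | tmul b h => simp [Algebra.TensorProduct.tmul_mul_tmul]
  | add u v hu hv => simp only [add_mul, map_add, hu, hv]

/-! ### The counit on an outer leg of `H ⊗ B ⊗ H` -/

/-- The map `ε ⊗ I ⊗ I : (H ⊗ M) ⊗ H → M ⊗ H`. -/
def counitLeft {M : Type*} [AddCommMonoid M] [Module k M] :
    (H ⊗[k] M) ⊗[k] H →ₗ[k] M ⊗[k] H :=
  LinearMap.rTensor H ((TensorProduct.lid k M).toLinearMap ∘ₗ
    LinearMap.rTensor M (Coalgebra.counit (R := k)))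

/-- The map `I ⊗ I ⊗ ε : (H ⊗ M) ⊗ H → H ⊗ M`. -/
def counitRight {M : Type*} [AddCommMonoid M] [Module k M] :
    (H ⊗[k] M) ⊗[k] H →ₗ[k] H ⊗[k] M :=
  (TensorProduct.rid k (H ⊗[k] M)).toLinearMap ∘ₗ
    LinearMap.lTensor (H ⊗[k] M) (Coalgebra.counit (R := k))

lemma counitLeft_mul (u : H ⊗[k] B) (w : B ⊗[k] H) :
    counitLeft ((u ⊗ₜ[k] (1 : H)) * (TensorProduct.assoc k H B H).symm ((1 : H) ⊗ₜ[k] w)) =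
      (TensorProduct.lid k B (LinearMap.rTensor B (Coalgebra.counit (R := k)) u) ⊗ₜ[k]
        (1 : H)) * w := by
  induction w with
  | zero => simp
  | tmul b h =>
    simp [counitLeft, Algebra.TensorProduct.tmul_mul_tmul, counit_mul_right]
  | add v w hv hw => simp only [tmul_add, mul_add, map_add, hv, hw]

lemma counitRight_mul (u : H ⊗[k] B) (w : B ⊗[k] H) :
    counitRight ((u ⊗ₜ[k] (1 : H)) * (TensorProduct.assoc k H B H).symm ((1 : H) ⊗ₜ[k] w)) =
      u * ((1 : H) ⊗ₜ[k]
        TensorProduct.rid k B (LinearMap.lTensor B (Coalgebra.counit (R := k)) w)) := by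
  induction w with
  | zero => simp
  | tmul b h =>
    simp [counitRight, Algebra.TensorProduct.tmul_mul_tmul]
  | add v w hv hw => simp only [tmul_add, mul_add, map_add, hv, hw]

lemma counitLeft_mem (S : Submodule k B) {z : (H ⊗[k] B) ⊗[k] H}
    (hz : z ∈ LinearMap.range (LinearMap.rTensor H (LinearMap.lTensor H S.subtype))) :
    counitLeft z ∈ LinearMap.range (LinearMap.rTensor H S.subtype) := by
  obtain ⟨w, rfl⟩ := hz
  refine ⟨counitLeft w, ?_⟩
  simp only [counitLeft, ← LinearMap.comp_apply, ← LinearMap.rTensor_comp]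
  congr 2
  ext h s
  simp

lemma counitRight_mem (S : Submodule k B) {z : (H ⊗[k] B) ⊗[k] H}
    (hz : z ∈ LinearMap.range (LinearMap.rTensor H (LinearMap.lTensor H S.subtype))) :
    counitRight z ∈ LinearMap.range (LinearMap.lTensor H S.subtype) := by
  obtain ⟨w, rfl⟩ := hz
  refine ⟨counitRight w, ?_⟩
  induction w with
  | zero => simp
  | tmul b h => simp [counitRight]
  | add v w hv hw => simp only [map_add, hv, hw]

/-! ### Contraction with the antipode -/

/-- The contraction `h ⊗ w ↦ (S(h) ⊗ 1) w` from `H ⊗ (H ⊗ B)` to `H ⊗ B`. -/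
def antipodeLeft : H ⊗[k] (H ⊗[k] B) →ₗ[k] H ⊗[k] B :=
  LinearMap.rTensor B (LinearMap.mul' k H ∘ₗ
      LinearMap.rTensor H (HopfAlgebra.antipode k (A := H))) ∘ₗ
    (TensorProduct.assoc k H H B).symm.toLinearMap

/-- The contraction `w ⊗ h ↦ w (1 ⊗ S(h))` from `(B ⊗ H) ⊗ H` to `B ⊗ H`. -/
def antipodeRight : (B ⊗[k] H) ⊗[k] H →ₗ[k] B ⊗[k] H :=
  LinearMap.lTensor B (LinearMap.mul' k H ∘ₗ
      LinearMap.lTensor H (HopfAlgebra.antipode k (A := H))) ∘ₗ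
    (TensorProduct.assoc k B H H).toLinearMap

lemma antipodeLeft_tmul_mul (h : H) (v w : H ⊗[k] B) :
    antipodeLeft (h ⊗ₜ[k] (v * w)) = antipodeLeft (h ⊗ₜ[k] v) * w := by
  induction v with
  | zero => simp
  | tmul g b =>
    induction w with
    | zero => simp
    | tmul g' b' => simp [antipodeLeft, Algebra.TensorProduct.tmul_mul_tmul, mul_assoc]
    | add u v hu hv => simp only [mul_add, tmul_add, map_add, hu, hv]
  | add u v hu hv => simp only [add_mul, tmul_add, map_add, hu, hv]

lemma antipodeRight_mul_tmul (h : H) (v w : B ⊗[k] H) :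
    antipodeRight ((v * w) ⊗ₜ[k] h) = v * antipodeRight (w ⊗ₜ[k] h) := by
  induction v with
  | zero => simp
  | tmul b g =>
    induction w with
    | zero => simp
    | tmul g' b' => simp [antipodeRight, Algebra.TensorProduct.tmul_mul_tmul, mul_assoc]
    | add u v hu hv => simp only [mul_add, add_tmul, map_add, hu, hv]
  | add u v hu hv => simp only [add_mul, add_tmul, map_add, hu, hv]

/-- `S(b₋₂) b₋₁ ⊗ b₀ = 1 ⊗ b`. -/
lemma antipodeLeft_lam {lam : B →ₗ[k] H ⊗[k] B} (hl : IsLeftComoduleAlgebra lam) (b : B) :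
    antipodeLeft (LinearMap.lTensor H lam (lam b)) = (1 : H) ⊗ₜ[k] b := by
  have key : ∀ z : H ⊗[k] B, antipodeLeft (TensorProduct.assoc k H H B
      (LinearMap.rTensor B (Coalgebra.comul (R := k)) z)) =
      (1 : H) ⊗ₜ[k] TensorProduct.lid k B
        (LinearMap.rTensor B (Coalgebra.counit (R := k)) z) := by
    intro z
    induction z with
    | zero => simp
    | tmul h b =>
      simp [antipodeLeft, HopfAlgebra.mul_antipode_rTensor_comul_apply,
        Algebra.algebraMap_eq_smul_one, smul_tmul]
    | add u v hu hv => simp only [tmul_add, map_add, hu, hv]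
  rw [hl.2.2, key, hl.1]

/-- `b₀ ⊗ b₁ S(b₂) = b ⊗ 1`. -/
lemma antipodeRight_rho {rho : B →ₗ[k] B ⊗[k] H} (hr : IsRightComoduleAlgebra rho) (b : B) :
    antipodeRight (LinearMap.rTensor H rho (rho b)) = b ⊗ₜ[k] (1 : H) := by
  have key : ∀ z : B ⊗[k] H, antipodeRight ((TensorProduct.assoc k B H H).symm
      (LinearMap.lTensor B (Coalgebra.comul (R := k)) z)) =
      TensorProduct.rid k B
        (LinearMap.lTensor B (Coalgebra.counit (R := k)) z) ⊗ₜ[k] (1 : H) := by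
    intro z
    induction z with
    | zero => simp
    | tmul b h =>
      simp [antipodeRight, HopfAlgebra.mul_antipode_lTensor_comul_apply,
        Algebra.algebraMap_eq_smul_one, smul_tmul]
    | add u v hu hv => simp only [add_tmul, map_add, hu, hv]
  rw [hr.2.2, key, hr.1]

/-- Applying `λ` to the middle leg of `(λ(a) ⊗ 1)(1 ⊗ w)` and contracting the two left legs with
the antipode cancels the coaction on `a`. -/
lemma contract_cond_left {lam : B →ₗ[k] H ⊗[k] B} (hl : IsLeftComoduleAlgebra lam) (a : B)
    (w : B ⊗[k] H) :
    LinearMap.rTensor H (antipodeLeft ∘ₗ LinearMap.lTensor H lam)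
        ((lam a ⊗ₜ[k] (1 : H)) * (TensorProduct.assoc k H B H).symm ((1 : H) ⊗ₜ[k] w)) =
      (((1 : H) ⊗ₜ[k] a) ⊗ₜ[k] (1 : H)) * LinearMap.rTensor H lam w := by
  have key : ∀ (u : H ⊗[k] B) (c : B),
      antipodeLeft (LinearMap.lTensor H lam (u * ((1 : H) ⊗ₜ[k] c))) =
        antipodeLeft (LinearMap.lTensor H lam u) * lam c := by
    intro u c
    induction u with
    | zero => simp
    | tmul h b =>
      simp [Algebra.TensorProduct.tmul_mul_tmul, hl.2.1, antipodeLeft_tmul_mul]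
    | add u v hu hv => simp only [add_mul, map_add, hu, hv]
  induction w with
  | zero => simp
  | tmul b h =>
    simp [Algebra.TensorProduct.tmul_mul_tmul, key, antipodeLeft_lam hl]
  | add u v hu hv => simp only [tmul_add, mul_add, map_add, hu, hv]

/-- Mirror image of `contract_cond_left`. -/
lemma contract_cond_right {rho : B →ₗ[k] B ⊗[k] H} (hr : IsRightComoduleAlgebra rho) (b : B)
    (u : H ⊗[k] B) :
    LinearMap.lTensor H (antipodeRight ∘ₗ LinearMap.rTensor H rho)
        (TensorProduct.assoc k H B H (u ⊗ₜ[k] (1 : H)) * ((1 : H) ⊗ₜ[k] rho b)) =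
      LinearMap.lTensor H rho u * ((1 : H) ⊗ₜ[k] (b ⊗ₜ[k] (1 : H))) := by
  have key : ∀ (w : B ⊗[k] H) (c : B),
      antipodeRight (LinearMap.rTensor H rho ((c ⊗ₜ[k] (1 : H)) * w)) =
        rho c * antipodeRight (LinearMap.rTensor H rho w) := by
    intro w c
    induction w with
    | zero => simp
    | tmul h b =>
      simp [Algebra.TensorProduct.tmul_mul_tmul, hr.2.1, antipodeRight_mul_tmul]
    | add u v hu hv => simp only [mul_add, map_add, hu, hv]
  induction u with
  | zero => simp
  | tmul h c =>
    simp [Algebra.TensorProduct.tmul_mul_tmul, key, antipodeRight_rho hr]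
  | add u v hu hv => simp only [add_tmul, add_mul, map_add, hu, hv]

/-- For `w = ρ(b)`: `(1 ⊗ a ⊗ 1) (λ ⊗ I)ρ(b) = (1 ⊗ a ⊗ 1)(λ(e) ⊗ 1) (λ ⊗ I)ρ(b)`. -/
lemma cond_left {lam : B →ₗ[k] H ⊗[k] B} (hl : IsLeftComoduleAlgebra lam) (a e : B)
    (w : B ⊗[k] H)
    (h : (lam a ⊗ₜ[k] (1 : H)) * (TensorProduct.assoc k H B H).symm ((1 : H) ⊗ₜ[k] w) =
        (lam a ⊗ₜ[k] (1 : H)) * (((1 : H) ⊗ₜ[k] e) ⊗ₜ[k] (1 : H)) *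
          (TensorProduct.assoc k H B H).symm ((1 : H) ⊗ₜ[k] w)) :
    (((1 : H) ⊗ₜ[k] a) ⊗ₜ[k] (1 : H)) * LinearMap.rTensor H lam w =
      (((1 : H) ⊗ₜ[k] a) ⊗ₜ[k] (1 : H)) *
        ((lam e ⊗ₜ[k] (1 : H)) * LinearMap.rTensor H lam w) := by
  have h1 : (((1 : H) ⊗ₜ[k] e) ⊗ₜ[k] (1 : H)) *
      (TensorProduct.assoc k H B H).symm ((1 : H) ⊗ₜ[k] w) =
      (TensorProduct.assoc k H B H).symm ((1 : H) ⊗ₜ[k] ((e ⊗ₜ[k] (1 : H)) * w)) := by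
    rw [← TensorProduct.assoc_symm_tmul, ← assoc_symm_mul,
      Algebra.TensorProduct.tmul_mul_tmul, one_mul]
  rw [mul_assoc, h1] at h
  have h2 := congrArg (LinearMap.rTensor H (antipodeLeft ∘ₗ LinearMap.lTensor H lam)) h
  rwa [contract_cond_left hl, contract_cond_left hl, rTensor_mul_left lam hl.2.1] at h2

/-- For `u = λ(a)`: `(I ⊗ ρ)λ(a) (1 ⊗ b ⊗ 1) = (I ⊗ ρ)λ(a) (1 ⊗ ρ(e)) (1 ⊗ b ⊗ 1)`. -/
lemma cond_right {rho : B →ₗ[k] B ⊗[k] H} (hr : IsRightComoduleAlgebra rho) (b e : B)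
    (u : H ⊗[k] B)
    (h : (u ⊗ₜ[k] (1 : H)) * (TensorProduct.assoc k H B H).symm ((1 : H) ⊗ₜ[k] rho b) =
        (u ⊗ₜ[k] (1 : H)) * (((1 : H) ⊗ₜ[k] e) ⊗ₜ[k] (1 : H)) *
          (TensorProduct.assoc k H B H).symm ((1 : H) ⊗ₜ[k] rho b)) :
    LinearMap.lTensor H rho u * ((1 : H) ⊗ₜ[k] (b ⊗ₜ[k] (1 : H))) =
      LinearMap.lTensor H rho u * ((1 : H) ⊗ₜ[k] rho e) *
        ((1 : H) ⊗ₜ[k] (b ⊗ₜ[k] (1 : H))) := by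
  rw [Algebra.TensorProduct.tmul_mul_tmul, one_mul] at h
  have h1 := congrArg (TensorProduct.assoc k H B H) h
  rw [assoc_mul, assoc_mul, LinearEquiv.apply_symm_apply] at h1
  have h2 := congrArg (LinearMap.lTensor H (antipodeRight ∘ₗ LinearMap.rTensor H rho)) h1
  rwa [contract_cond_right hr, contract_cond_right hr, lTensor_mul_right rho hr.2.1] at h2

/-! ### The identity of `S` acts trivially on `S ⊗ H` and `H ⊗ S` -/

lemma rTensor_range_mul (S : Submodule k B) (e : B) (heR : ∀ a ∈ S, a * e = a)
    {z : B ⊗[k] H} (hz : z ∈ LinearMap.range (LinearMap.rTensor H S.subtype)) :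
    z * (e ⊗ₜ[k] (1 : H)) = z := by
  obtain ⟨w, rfl⟩ := hz
  induction w with
  | zero => simp
  | tmul s h => simp [Algebra.TensorProduct.tmul_mul_tmul, heR s s.2]
  | add u v hu hv => simp only [add_mul, map_add, hu, hv]

lemma lTensor_range_mul (S : Submodule k B) (e : B) (heL : ∀ a ∈ S, e * a = a)
    {z : H ⊗[k] B} (hz : z ∈ LinearMap.range (LinearMap.lTensor H S.subtype)) :
    ((1 : H) ⊗ₜ[k] e) * z = z := by
  obtain ⟨w, rfl⟩ := hz
  induction w with
  | zero => simp
  | tmul h s => simp [Algebra.TensorProduct.tmul_mul_tmul, heL s s.2]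
  | add u v hu hv => simp only [mul_add, map_add, hu, hv]

lemma rTensor_fixed {C : Type*} [Ring C] [Algebra k C] (S : Submodule k B) (f : B →ₗ[k] C)
    (c : C) (hf : ∀ a ∈ S, c * f a = f a)
    {z : B ⊗[k] H} (hz : z ∈ LinearMap.range (LinearMap.rTensor H S.subtype)) :
    (c ⊗ₜ[k] (1 : H)) * LinearMap.rTensor H f z = LinearMap.rTensor H f z := by
  obtain ⟨w, rfl⟩ := hz
  induction w with
  | zero => simp
  | tmul s h => simp [Algebra.TensorProduct.tmul_mul_tmul, hf s s.2]
  | add u v hu hv => simp only [mul_add, map_add, hu, hv]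

lemma lTensor_fixed {C : Type*} [Ring C] [Algebra k C] (S : Submodule k B) (f : B →ₗ[k] C)
    (c : C) (hf : ∀ a ∈ S, f a * c = f a)
    {z : H ⊗[k] B} (hz : z ∈ LinearMap.range (LinearMap.lTensor H S.subtype)) :
    LinearMap.lTensor H f z * ((1 : H) ⊗ₜ[k] c) = LinearMap.lTensor H f z := by
  obtain ⟨w, rfl⟩ := hz
  induction w with
  | zero => simp
  | tmul h s => simp [Algebra.TensorProduct.tmul_mul_tmul, hf s s.2]
  | add u v hu hv => simp only [add_mul, map_add, hu, hv]

end Helpers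

theorem induced_partial_bicomodule_algebra
    {B : Type*} [Ring B] [Algebra k B]
    (lam : B →ₗ[k] H ⊗[k] B) (rho : B →ₗ[k] B ⊗[k] H)
    (hB : IsBicomoduleAlgebra lam rho)
    (S : Submodule k B) (hSmul : ∀ a ∈ S, ∀ b ∈ S, a * b ∈ S)
    (e : B) (he : e ∈ S) (heL : ∀ a ∈ S, e * a = a) (heR : ∀ a ∈ S, a * e = a)
    (hcond : ∀ a ∈ S, ∀ b ∈ S,
      (lam a ⊗ₜ[k] (1 : H)) *
          (TensorProduct.assoc k H B H).symm ((1 : H) ⊗ₜ[k] rho b) =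
        (lam a ⊗ₜ[k] (1 : H)) * (((1 : H) ⊗ₜ[k] e) ⊗ₜ[k] (1 : H)) *
          (TensorProduct.assoc k H B H).symm ((1 : H) ⊗ₜ[k] rho b) ∧
      (lam a ⊗ₜ[k] (1 : H)) *
          (TensorProduct.assoc k H B H).symm ((1 : H) ⊗ₜ[k] rho b) ∈
        LinearMap.range (LinearMap.rTensor H (LinearMap.lTensor H S.subtype))) :
    -- with ρ̄ := (1_A ⊗ 1_H)ρ(-) and λ̄ := λ(-)(1_H ⊗ 1_A):
    (∀ a ∈ S,
      -- ρ̄ takes values in A ⊗ H and λ̄ takes values in H ⊗ A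
      (LinearMap.mulLeft k (e ⊗ₜ[k] (1 : H)) ∘ₗ rho) a ∈
          LinearMap.range (LinearMap.rTensor H S.subtype) ∧
      (LinearMap.mulRight k ((1 : H) ⊗ₜ[k] e) ∘ₗ lam) a ∈
          LinearMap.range (LinearMap.lTensor H S.subtype)) ∧
    -- ρ̄ and λ̄ are multiplicative on A
    (∀ a ∈ S, ∀ b ∈ S,
      (LinearMap.mulLeft k (e ⊗ₜ[k] (1 : H)) ∘ₗ rho) (a * b) =
          (LinearMap.mulLeft k (e ⊗ₜ[k] (1 : H)) ∘ₗ rho) a *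
            (LinearMap.mulLeft k (e ⊗ₜ[k] (1 : H)) ∘ₗ rho) b ∧
      (LinearMap.mulRight k ((1 : H) ⊗ₜ[k] e) ∘ₗ lam) (a * b) =
          (LinearMap.mulRight k ((1 : H) ⊗ₜ[k] e) ∘ₗ lam) a *
            (LinearMap.mulRight k ((1 : H) ⊗ₜ[k] e) ∘ₗ lam) b) ∧
    -- counit axioms
    (∀ a ∈ S,
      (TensorProduct.rid k B) ((LinearMap.lTensor B (Coalgebra.counit (R := k)))
        ((LinearMap.mulLeft k (e ⊗ₜ[k] (1 : H)) ∘ₗ rho) a)) = a ∧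
      (TensorProduct.lid k B) ((LinearMap.rTensor B (Coalgebra.counit (R := k)))
        ((LinearMap.mulRight k ((1 : H) ⊗ₜ[k] e) ∘ₗ lam) a)) = a) ∧
    -- partial coassociativity: (ρ̄ ⊗ I)ρ̄(a) = (ρ̄(1_A) ⊗ 1_H)((I ⊗ Δ)ρ̄(a)) and
    -- (I ⊗ λ̄)λ̄(a) = ((Δ ⊗ I)λ̄(a))(1_H ⊗ λ̄(1_A))
    (∀ a ∈ S,
      (LinearMap.rTensor H (LinearMap.mulLeft k (e ⊗ₜ[k] (1 : H)) ∘ₗ rho))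
          ((LinearMap.mulLeft k (e ⊗ₜ[k] (1 : H)) ∘ₗ rho) a) =
        ((LinearMap.mulLeft k (e ⊗ₜ[k] (1 : H)) ∘ₗ rho) e ⊗ₜ[k] (1 : H)) *
          (TensorProduct.assoc k B H H).symm
            ((LinearMap.lTensor B (Coalgebra.comul (R := k)))
              ((LinearMap.mulLeft k (e ⊗ₜ[k] (1 : H)) ∘ₗ rho) a)) ∧
      (LinearMap.lTensor H (LinearMap.mulRight k ((1 : H) ⊗ₜ[k] e) ∘ₗ lam))
          ((LinearMap.mulRight k ((1 : H) ⊗ₜ[k] e) ∘ₗ lam) a) =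
        ((TensorProduct.assoc k H H B)
            ((LinearMap.rTensor B (Coalgebra.comul (R := k)))
              ((LinearMap.mulRight k ((1 : H) ⊗ₜ[k] e) ∘ₗ lam) a))) *
          ((1 : H) ⊗ₜ[k] (LinearMap.mulRight k ((1 : H) ⊗ₜ[k] e) ∘ₗ lam) e)) ∧
    -- compatibility: (I_H ⊗ ρ̄)λ̄ = (λ̄ ⊗ I_H)ρ̄ on A
    (∀ a ∈ S,
      (TensorProduct.assoc k H B H)
          ((LinearMap.rTensor H (LinearMap.mulRight k ((1 : H) ⊗ₜ[k] e) ∘ₗ lam))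
            ((LinearMap.mulLeft k (e ⊗ₜ[k] (1 : H)) ∘ₗ rho) a)) =
        (LinearMap.lTensor H (LinearMap.mulLeft k (e ⊗ₜ[k] (1 : H)) ∘ₗ rho))
          ((LinearMap.mulRight k ((1 : H) ⊗ₜ[k] e) ∘ₗ lam) a)) := by
  obtain ⟨hr, hl, hc⟩ := hB
  have R1 : ∀ a ∈ S, (LinearMap.mulLeft k (e ⊗ₜ[k] (1 : H)) ∘ₗ rho) a ∈
      LinearMap.range (LinearMap.rTensor H S.subtype) := by
    intro a ha
    have h := counitLeft_mem S (hcond e he a ha).2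
    rwa [counitLeft_mul, hl.1] at h
  have L1 : ∀ a ∈ S, (LinearMap.mulRight k ((1 : H) ⊗ₜ[k] e) ∘ₗ lam) a ∈
      LinearMap.range (LinearMap.lTensor H S.subtype) := by
    intro a ha
    have h := counitRight_mem S (hcond a ha e he).2
    rwa [counitRight_mul, hr.1] at h
  have R2 : ∀ a ∈ S, (LinearMap.mulLeft k (e ⊗ₜ[k] (1 : H)) ∘ₗ rho) a * (e ⊗ₜ[k] (1 : H)) =
      (LinearMap.mulLeft k (e ⊗ₜ[k] (1 : H)) ∘ₗ rho) a :=
    fun a ha => rTensor_range_mul S e heR (R1 a ha)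
  have L2 : ∀ a ∈ S, ((1 : H) ⊗ₜ[k] e) * (LinearMap.mulRight k ((1 : H) ⊗ₜ[k] e) ∘ₗ lam) a =
      (LinearMap.mulRight k ((1 : H) ⊗ₜ[k] e) ∘ₗ lam) a :=
    fun a ha => lTensor_range_mul S e heL (L1 a ha)
  have Rdef : ∀ a, (LinearMap.mulLeft k (e ⊗ₜ[k] (1 : H)) ∘ₗ rho) a =
      (e ⊗ₜ[k] (1 : H)) * rho a := fun _ => rfl
  have Ldef : ∀ a, (LinearMap.mulRight k ((1 : H) ⊗ₜ[k] e) ∘ₗ lam) a =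
      lam a * ((1 : H) ⊗ₜ[k] e) := fun _ => rfl
  refine ⟨fun a ha => ⟨R1 a ha, L1 a ha⟩, fun a ha b hb => ⟨?_, ?_⟩, fun a ha => ⟨?_, ?_⟩,
    fun a ha => ⟨?_, ?_⟩, fun a ha => ?_⟩
  · rw [Rdef b, ← mul_assoc, R2 a ha, Rdef, Rdef, hr.2.1, mul_assoc]
  · rw [Ldef a, mul_assoc, L2 b hb, Ldef, Ldef, hl.2.1, mul_assoc]
  · rw [Rdef, counit_mul_left, hr.1, heL a ha]
  · rw [Ldef, counit_mul_right, hl.1, heR a ha]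
  · rw [rTensor_mulLeft_comp, Rdef a, rTensor_mul_left rho hr.2.1, hr.2.2, comul_mul_left,
      assoc_symm_mul, TensorProduct.assoc_symm_tmul, ← mul_assoc, ← mul_assoc,
      Algebra.TensorProduct.tmul_mul_tmul, Algebra.TensorProduct.tmul_mul_tmul, R2 e he,
      one_mul, Rdef]
  · rw [lTensor_mulRight_comp, Ldef a, lTensor_mul_right lam hl.2.1, hl.2.2, comul_mul_right,
      assoc_mul, TensorProduct.assoc_tmul, mul_assoc, mul_assoc,
      Algebra.TensorProduct.tmul_mul_tmul, Algebra.TensorProduct.tmul_mul_tmul, L2 e he,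
      one_mul, Ldef]
  · -- Both sides are equal to `(1 ⊗ e ⊗ 1) X (1 ⊗ e ⊗ 1)`.
    have hA := cond_left hl e e (rho a) (hcond e he a ha).1
    have hB := cond_right hr e e (lam a) (hcond a ha e he).1
    have hX := hc a
    have hL : LinearMap.rTensor H (LinearMap.mulRight k ((1 : H) ⊗ₜ[k] e) ∘ₗ lam)
        ((LinearMap.mulLeft k (e ⊗ₜ[k] (1 : H)) ∘ₗ rho) a) =
        (((1 : H) ⊗ₜ[k] e) ⊗ₜ[k] (1 : H)) * LinearMap.rTensor H lam (rho a) *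
          (((1 : H) ⊗ₜ[k] e) ⊗ₜ[k] (1 : H)) := by
      rw [← rTensor_fixed S _ ((1 : H) ⊗ₜ[k] e) L2 (R1 a ha), rTensor_mulRight_comp, Rdef,
        rTensor_mul_left lam hl.2.1, ← mul_assoc, ← hA]
    have hR : LinearMap.lTensor H (LinearMap.mulLeft k (e ⊗ₜ[k] (1 : H)) ∘ₗ rho)
        ((LinearMap.mulRight k ((1 : H) ⊗ₜ[k] e) ∘ₗ lam) a) =
        ((1 : H) ⊗ₜ[k] (e ⊗ₜ[k] (1 : H))) * (LinearMap.lTensor H rho (lam a) *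
          ((1 : H) ⊗ₜ[k] (e ⊗ₜ[k] (1 : H)))) := by
      rw [← lTensor_fixed S _ (e ⊗ₜ[k] (1 : H)) R2 (L1 a ha), lTensor_mulLeft_comp, Ldef,
        lTensor_mul_right rho hr.2.1, mul_assoc, ← hB]
    rw [hL, hR, assoc_mul, assoc_mul, hX, TensorProduct.assoc_tmul, mul_assoc]
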